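/- arXiv:0904.3503 — 2 statements merged into one kernel-verified Lean document; each statement's English description precedes it below -/
import Mathlib

section
/- Let T be a rooted tree, D a search tree for T, and T' a subtree of T. Then there exists a search tree D' for T' such that for every node x of T', d(r(D'), l_x) = d(r(D), l_x) − n_x, where n_x is the number of nodes on the path in D from r(D) to l_x that are assigned to nodes of T ∖ T'. -/
/-!
The tree `D'` is obtained from `D` by deleting every node whose label lies outside `V'`.
A deleted node has at most one subtree that matters: if `a ∉ V'`, connectedness of `V'` forces
either `V' ⊆ T_a` or `V' ∩ T_a = ∅` (`RTree.all_anc_or_none`), so in a search tree all leaves with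
labels in `V'` below a node labelled `a` are on the same side, and that side replaces the node.

Two facts make the deletion work. The leaves of the pruned tree are the leaves of `D` with labels in
`V'`, in the same order (`BT.leafList_prune`); the point is that a surviving inner node never
becomes a new leaf, because in a search tree for `T` an inner node labelled `a` has the leaf `l_a`
in its right subtree (`BT.VL.node`), and that leaf survives as well. Consequently the path to a
leaf labelled in `V'` is the old path with the labels outside `V'` filtered out
(`BT.pathTo_prune`), which is the depth formula.
-/

open scoped Classical

/-- Ordered binary trees, every node carrying a label (assignment). `nil` is the empty tree. -/
inductive BT (α : Type) where
  | nil : BT α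
  | node (a : α) (l r : BT α) : BT α
  deriving DecidableEq

namespace BT

variable {α : Type}

/-- Labels of the leaves (nodes with no children), from left to right. -/
def leafList : BT α → List α
  | .nil => []
  | .node a .nil .nil => [a]
  | .node _ l r => l.leafList ++ r.leafList

/-- Labels of all nodes. -/
def vals : BT α → List α
  | .nil => []
  | .node a l r => a :: (l.vals ++ r.vals)

/-- Leaf labels together with the depth (number of edges from the root) of the leaf. -/
def leafDepths : BT α → List (α × ℕ)
  | .nil => []
  | .node a .nil .nil => [(a, 0)]
  | .node _ l r => (l.leafDepths ++ r.leafDepths).map (fun p => (p.1, p.2 + 1))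

/-- Height of a binary tree, in edges. -/
def height : BT α → ℕ
  | .nil => 0
  | .node _ .nil .nil => 0
  | .node _ l r => max l.height r.height + 1

/-- Label of the root. -/
def rootVal : BT α → Option α
  | .nil => none
  | .node a _ _ => some a

/-- The labels of the nodes on the path from the root to the (leftmost) leaf labelled `x`. -/
def pathTo [DecidableEq α] : BT α → α → List α
  | .nil, _ => []
  | .node a l r, x => a :: (if x ∈ r.leafList then r.pathTo x else l.pathTo x)

/-- The depth (number of edges) of the leaf labelled `x`. -/
def depthOf [DecidableEq α] (D : BT α) (x : α) : ℕ := (D.pathTo x).length - 1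

/-- The search-tree property w.r.t. a descendance relation `desc` (`desc u v` meaning
`v` lies in the subtree of the input tree rooted at `u`): everything in the right subtree
of a node labelled `a` is in the subtree of `a`, everything in the left subtree is not. -/
def SearchProp (desc : α → α → Prop) : BT α → Prop
  | .nil => True
  | .node a l r =>
      (∀ b ∈ r.vals, desc a b) ∧ (∀ b ∈ l.vals, ¬ desc a b) ∧
        SearchProp desc l ∧ SearchProp desc r

/-- Cost (expected number of queries, unnormalized) of a search tree. -/
def cost (w : α → ℕ) (D : BT α) : ℕ := (D.leafDepths.map (fun p => p.2 * w p.1)).sum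

/-- Total weight of the leaves of a search (sub)tree. -/
def leafWeight (w : α → ℕ) (D : BT α) : ℕ := (D.leafList.map w).sum

/-- All subtrees of a binary tree together with their depth. -/
def subtreesD : BT α → List (BT α × ℕ)
  | .nil => []
  | .node a l r =>
      (BT.node a l r, 0) :: (l.subtreesD ++ r.subtreesD).map (fun p => (p.1, p.2 + 1))

end BT

/-- A finite rooted tree, encoded by a parent function on `Fin n`. -/
structure RTree where
  n : ℕ
  parent : Fin n → Fin n
  root : Fin n
  parent_root : parent root = root
  reach : ∀ v, ∃ k, parent^[k] v = root

namespace RTree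

variable (T : RTree)

/-- `T.anc u v` holds iff `u` is a (weak) ancestor of `v`, i.e. `v ∈ T_u`. -/
def anc (u v : Fin T.n) : Prop := ∃ k, T.parent^[k] v = u

/-- The set of nodes of the subtree `T_u` rooted at `u`. -/
noncomputable def subtree (u : Fin T.n) : Finset (Fin T.n) :=
  Finset.univ.filter (fun v => T.anc u v)

/-- Total weight of a set of nodes. -/
def wsum (w : Fin T.n → ℕ) (S : Finset (Fin T.n)) : ℕ := ∑ v ∈ S, w v

/-- `D` is a search tree for the entire tree `T`. -/
def IsSearchTree (D : BT (Fin T.n)) : Prop :=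
  (∀ v : Fin T.n, D.leafList.count v = 1) ∧ BT.SearchProp T.anc D

/-- `D` is a search tree for the subtree (or subforest) of `T` induced by the node set `V'`. -/
def IsSearchTreeOn (V' : Finset (Fin T.n)) (D : BT (Fin T.n)) : Prop :=
  (∀ v : Fin T.n, D.leafList.count v = (if v ∈ V' then 1 else 0)) ∧
    (∀ a ∈ D.vals, a ∈ V') ∧ BT.SearchProp T.anc D

/-- `D` is an optimal (minimum expected cost) search tree for `(T,w)`. -/
def IsOptimal (w : Fin T.n → ℕ) (D : BT (Fin T.n)) : Prop :=
  T.IsSearchTree D ∧ ∀ D' : BT (Fin T.n), T.IsSearchTree D' → BT.cost w D ≤ BT.cost w D'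

/-- Degree of a node of `T` (number of neighbours). -/
noncomputable def degree (v : Fin T.n) : ℕ :=
  (Finset.univ.filter (fun u => T.parent u = v ∧ u ≠ v)).card + (if v = T.root then 0 else 1)

/-- Maximum degree `Δ(T)`. -/
noncomputable def maxDegree : ℕ := Finset.univ.sup T.degree

/-- `y` lies on the (unique) path between `u` and `v` in `T`. -/
def onPath (y u v : Fin T.n) : Prop :=
  (T.anc y u ∨ T.anc y v) ∧ (∀ z, T.anc z u → T.anc z v → T.anc z y)

end RTree


namespace BT

variable {α : Type}

theorem leafList_node (a : α) {l r : BT α} (h : ¬ (l = .nil ∧ r = .nil)) :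
    (BT.node a l r).leafList = l.leafList ++ r.leafList := by
  cases l <;> cases r <;> simp_all [leafList]

theorem mem_vals_of_mem_leafList {D : BT α} {x : α} (h : x ∈ D.leafList) : x ∈ D.vals := by
  induction D with
  | nil => simp [leafList] at h
  | node a l r ihl ihr =>
    by_cases hn : l = .nil ∧ r = .nil
    · obtain ⟨rfl, rfl⟩ := hn
      simpa [leafList, vals] using h
    · rw [leafList_node a hn, List.mem_append] at h
      simp only [vals, List.mem_cons, List.mem_append]
      exact Or.inr (h.imp ihl ihr)

/-- Every label occurring in `D` is the label of some leaf of `D`. -/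
def VL (D : BT α) : Prop := ∀ b ∈ D.vals, b ∈ D.leafList

/-- In a search tree each of whose labels occurs at a leaf, the same holds for the two subtrees of
an inner node, and the leaf with the label of that node lies in the right subtree. -/
theorem VL.node {desc : α → α → Prop} (hrefl : ∀ a, desc a a) {a : α} {l r : BT α}
    (hn : ¬ (l = .nil ∧ r = .nil)) (hs : SearchProp desc (.node a l r)) (hv : VL (.node a l r)) :
    VL l ∧ VL r ∧ a ∈ r.leafList := by
  obtain ⟨hr, hl, -, -⟩ := hs
  unfold VL at hv
  simp only [leafList_node a hn, vals, List.mem_cons, List.mem_append] at hv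
  refine ⟨fun b hb => ?_, fun b hb => ?_, ?_⟩
  · exact (hv b (.inr (.inl hb))).resolve_right
      fun h => hl b hb (hr b (mem_vals_of_mem_leafList h))
  · exact (hv b (.inr (.inr hb))).resolve_left
      fun h => hl b (mem_vals_of_mem_leafList h) (hr b hb)
  · exact (hv a (.inl rfl)).resolve_left fun h => hl a (mem_vals_of_mem_leafList h) (hrefl a)

/-- Delete all nodes of `D` whose label is not in `S`. A deleted node labelled `a` is replaced by
its right subtree if `S` contains a descendant of `a`, and by its left subtree otherwise. -/
noncomputable def prune (desc : α → α → Prop) (S : Finset α) : BT α → BT α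
  | .nil => .nil
  | .node a l r =>
      if a ∈ S then .node a (prune desc S l) (prune desc S r)
      else if ∃ v ∈ S, desc a v then prune desc S r else prune desc S l

theorem mem_vals_prune {desc : α → α → Prop} {S : Finset α} {D : BT α} {b : α}
    (h : b ∈ (prune desc S D).vals) : b ∈ S ∧ b ∈ D.vals := by
  induction D with
  | nil => simp [prune, vals] at h
  | node a l r ihl ihr =>
    unfold prune at h
    simp only [vals, List.mem_cons, List.mem_append]
    split_ifs at h with h1 h2
    · simp only [vals, List.mem_cons, List.mem_append] at h
      rcases h with rfl | h | h
      · exact ⟨h1, .inl rfl⟩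
      · exact ⟨(ihl h).1, .inr (.inl (ihl h).2)⟩
      · exact ⟨(ihr h).1, .inr (.inr (ihr h).2)⟩
    · exact ⟨(ihr h).1, .inr (.inr (ihr h).2)⟩
    · exact ⟨(ihl h).1, .inr (.inl (ihl h).2)⟩

theorem SearchProp.prune {desc : α → α → Prop} {S : Finset α} {D : BT α}
    (h : SearchProp desc D) : SearchProp desc (prune desc S D) := by
  induction D with
  | nil => trivial
  | node a l r ihl ihr =>
    obtain ⟨hr, hl, sl, sr⟩ := h
    unfold BT.prune
    split_ifs
    · exact ⟨fun b hb => hr b (mem_vals_prune hb).2, fun b hb => hl b (mem_vals_prune hb).2,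
        ihl sl, ihr sr⟩
    · exact ihr sr
    · exact ihl sl

theorem leafList_prune {desc : α → α → Prop} (hrefl : ∀ a, desc a a) {S : Finset α}
    (hS : ∀ a, a ∉ S → (∀ v ∈ S, desc a v) ∨ ∀ v ∈ S, ¬ desc a v) {D : BT α}
    (hs : SearchProp desc D) (hv : VL D) :
    (prune desc S D).leafList = D.leafList.filter (fun a => decide (a ∈ S)) := by
  induction D with
  | nil => simp [prune, leafList]
  | node a l r ihl ihr =>
    by_cases hn : l = .nil ∧ r = .nil
    · obtain ⟨rfl, rfl⟩ := hn
      by_cases ha : a ∈ S <;> simp [prune, leafList, ha]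
    · obtain ⟨vl, vr, har⟩ := hv.node hrefl hn hs
      obtain ⟨hr, hl, sl, sr⟩ := hs
      have il := ihl sl vl
      have ir := ihr sr vr
      unfold prune
      rw [leafList_node a hn, List.filter_append, ← il, ← ir]
      split_ifs with h1 h2
      · refine leafList_node a fun h => ?_
        have : a ∈ (prune desc S r).leafList := by rw [ir]; simp [h1, har]
        rw [h.2] at this
        simp [leafList] at this
      · -- all of `S` lies below `a`, so no leaf of `l` survives
        have h3 : ∀ v ∈ S, desc a v := (hS a h1).resolve_right (by push Not; exact h2)
        have : (prune desc S l).leafList = [] := by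
          rw [il, List.filter_eq_nil_iff]
          intro b hb hbS
          exact hl b (mem_vals_of_mem_leafList hb) (h3 b (by simpa using hbS))
        simp [this]
      · have : (prune desc S r).leafList = [] := by
          rw [ir, List.filter_eq_nil_iff]
          intro b hb hbS
          exact h2 ⟨b, by simpa using hbS, hr b (mem_vals_of_mem_leafList hb)⟩
        simp [this]

theorem pathTo_prune [DecidableEq α] {desc : α → α → Prop} (hrefl : ∀ a, desc a a) {S : Finset α}
    (hS : ∀ a, a ∉ S → (∀ v ∈ S, desc a v) ∨ ∀ v ∈ S, ¬ desc a v) {D : BT α}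
    (hs : SearchProp desc D) (hv : VL D) {x : α} (hx : x ∈ S) (hxD : x ∈ D.leafList) :
    (prune desc S D).pathTo x = (D.pathTo x).filter (fun a => decide (a ∈ S)) := by
  induction D with
  | nil => simp [leafList] at hxD
  | node a l r ihl ihr =>
    by_cases hn : l = .nil ∧ r = .nil
    · obtain ⟨rfl, rfl⟩ := hn
      obtain rfl : x = a := by simpa [leafList] using hxD
      simp [prune, pathTo, leafList, hx]
    · obtain ⟨vl, vr, har⟩ := hv.node hrefl hn hs
      obtain ⟨hr, hl, sl, sr⟩ := hs
      have hmem : x ∈ (prune desc S r).leafList ↔ x ∈ r.leafList := by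
        rw [leafList_prune hrefl hS sr vr]; simp [hx]
      rw [leafList_node a hn, List.mem_append] at hxD
      unfold prune
      split_ifs with h1 h2
      · by_cases hxr : x ∈ r.leafList
        · simp [pathTo, hmem, hxr, h1, ihr sr vr hxr]
        · simp [pathTo, hmem, hxr, h1, ihl sl vl (hxD.resolve_right hxr)]
      · have h3 : ∀ v ∈ S, desc a v := (hS a h1).resolve_right (by push Not; exact h2)
        have hxr : x ∈ r.leafList :=
          hxD.resolve_left fun h => hl x (mem_vals_of_mem_leafList h) (h3 x hx)
        simp [pathTo, hxr, h1, ihr sr vr hxr]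
      · have hxr : x ∉ r.leafList := fun h => h2 ⟨x, hx, hr x (mem_vals_of_mem_leafList h)⟩
        simp [pathTo, hxr, h1, ihl sl vl (hxD.resolve_right hxr)]

end BT

namespace RTree

variable (T : RTree)

theorem anc_trans {u v w : Fin T.n} (h1 : T.anc u v) (h2 : T.anc v w) : T.anc u w := by
  obtain ⟨i, rfl⟩ := h1
  obtain ⟨j, rfl⟩ := h2
  exact ⟨i + j, Function.iterate_add_apply _ _ _ _⟩

/-- Any two ancestors of a node are comparable. -/
theorem anc_total {a z u : Fin T.n} (ha : T.anc a u) (hz : T.anc z u) :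
    T.anc a z ∨ T.anc z a := by
  obtain ⟨i, rfl⟩ := ha
  obtain ⟨j, rfl⟩ := hz
  rcases le_total i j with h | h
  · exact .inr ⟨j - i, by rw [← Function.iterate_add_apply, Nat.sub_add_cancel h]⟩
  · exact .inl ⟨i - j, by rw [← Function.iterate_add_apply, Nat.sub_add_cancel h]⟩

/-- If `a` is outside the connected set `V'`, then `V' ⊆ T_a` or `V' ∩ T_a = ∅`: the path joining
a node of `T_a` to a node outside `T_a` passes through `a`. -/
theorem all_anc_or_none {V' : Finset (Fin T.n)}
    (hconn : ∀ u ∈ V', ∀ v ∈ V', ∀ y, T.onPath y u v → y ∈ V') (a : Fin T.n) (ha : a ∉ V') :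
    (∀ v ∈ V', T.anc a v) ∨ ∀ v ∈ V', ¬ T.anc a v := by
  by_contra! h
  obtain ⟨⟨v, hv, hav⟩, u, hu, hau⟩ := h
  exact ha (hconn u hu v hv a ⟨.inl hau, fun z hzu hzv =>
    (T.anc_total hau hzu).resolve_left fun haz => hav (T.anc_trans haz hzv)⟩)

end RTree

/-- Let `T` be a rooted tree, `D` a search tree for `T`, and `T'` a subtree of `T`
(a nonempty connected subgraph, given by its node set `V'`).  Then there exists a
search tree `D'` for `T'` such that for every node `x` of `T'`,
`d(r(D'), l_x) = d(r(D), l_x) − n_x`, where `n_x` is the number of nodes on the path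
in `D` from `r(D)` to `l_x` assigned to nodes of `T ∖ T'`. -/
theorem statement0 (T : RTree) (D : BT (Fin T.n)) (hD : T.IsSearchTree D)
    (V' : Finset (Fin T.n)) (hne : V'.Nonempty)
    (hconn : ∀ u ∈ V', ∀ v ∈ V', ∀ y, T.onPath y u v → y ∈ V') :
    ∃ D' : BT (Fin T.n), T.IsSearchTreeOn V' D' ∧
      ∀ x ∈ V',
        D'.depthOf x + (D.pathTo x).countP (fun a => decide (a ∉ V')) = D.depthOf x := by
  obtain ⟨hcount, hs⟩ := hD
  have hrefl : ∀ a, T.anc a a := fun a => ⟨0, rfl⟩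
  have hS := T.all_anc_or_none hconn
  have hmem : ∀ v, v ∈ D.leafList := fun v => List.count_pos_iff.1 (by rw [hcount v]; norm_num)
  have hv : BT.VL D := fun b _ => hmem b
  have hleaf := BT.leafList_prune hrefl hS hs hv
  refine ⟨BT.prune T.anc V' D, ⟨fun v => ?_, fun a h => (BT.mem_vals_prune h).1, hs.prune⟩,
    fun x hx => ?_⟩
  · rw [hleaf]
    split_ifs with h
    · rw [List.count_filter (by simpa using h), hcount v]
    · exact List.count_eq_zero.2 fun h' => h (by simpa using (List.mem_filter.1 h').2)
  · have hpath := BT.pathTo_prune hrefl hS hs hv hx (hmem x)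
    -- the truncated subtraction in `depthOf` is harmless: the pruned tree has the leaf `l_x`
    have hpos : 0 < ((BT.prune T.anc V' D).pathTo x).length := by
      have : x ∈ (BT.prune T.anc V' D).leafList := by rw [hleaf]; simp [hmem x, hx]
      cases h : BT.prune T.anc V' D with
      | nil => rw [h] at this; simp [BT.leafList] at this
      | node a l r => simp [BT.pathTo]
    have hlen := List.length_eq_countP_add_countP (fun a => decide (a ∈ V')) (l := D.pathTo x)
    rw [hpath, ← List.countP_eq_length_filter] at hpos
    unfold BT.depthOf
    rw [hpath, ← List.countP_eq_length_filter]
    simp only [decide_eq_true_eq] at hlen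
    omega
end

section
/- There is a universal constant C such that for every tree T with n ≥ 2 nodes and nonnegative integer weight function w, there exists an optimal search tree for (T,w) of height at most C·Δ(T)·(log₂(w(T) + 2) + log₂ n), where Δ(T) is the maximum degree of T and w(T) is the total weight of the nodes of T. -/
/-!
Call the weight of an internal node of a search tree the total weight of the candidate set that
reaches it; the cost of the tree is the sum of these weights. The height bound rests on the fact
that an optimal tree for a candidate set `S` of weight `W > 0` has at most `4 (Δ + 1)` internal
nodes of weight more than `3 W / 4` (`cnt_le`).

To see this, query the children of a weighted centroid and then the centroid itself. These at most
`Δ + 1` queries cut `S` into disjoint parts that are singletons or have weight at most `W / 2`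
(`centroid`). In each part, continue with the original tree, skipping the queries that do not split
what is left of the part (`exists_restr`). A query separating two candidates of a part belongs to
that part, so each node of the original tree still splits at most one part. A node of weight more
than `3 W / 4` therefore now contributes at most `W / 2`, saving at least `W / 4` (`savings`), while
the new queries add at most `(Δ + 1) W` (`assemble`). Optimality bounds the number of such nodes.

Hence below at most `4 (Δ + 1)` queries every candidate set has lost a quarter of its weight
(`replace_light`). As weights are integers, after `O(log w(T))` rounds the weight is zero; there the
subtree may be replaced at no cost by one obtained from repeated centroid splitting with respect to
cardinality, whose height is at most `(Δ + 1) (log₂ n + 1)` (`exists_balanced`, `exists_low`).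

A tree in the sense of `BT` may contain queries with only one possible answer. The argument is run
on the trees `QT` without such queries; `exists_restr` applied to the whole node set shows that
nothing is lost, and `toBT` translates back.
-/

open scoped Classical

/-! ### Trees with proper queries only -/

namespace SearchHeight

variable {V : Type}

/-- Binary decision trees in which every internal node has exactly two children. -/
inductive QT (V : Type) where
  | leaf (v : V) : QT V
  | node (a : V) (l r : QT V) : QT V

/-- The part of `S` below `a`, i.e. `S ∩ T_a`. -/
noncomputable def inn (desc : V → V → Prop) (a : V) (S : Finset V) : Finset V :=
  S.filter (fun x => desc a x)

/-- The part of `S` not below `a`, i.e. `S \ T_a`. -/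
noncomputable def out (desc : V → V → Prop) (a : V) (S : Finset V) : Finset V :=
  S.filter (fun x => ¬ desc a x)

/-- Total weight of a set of nodes. -/
def wt (w : V → ℕ) (S : Finset V) : ℕ := ∑ v ∈ S, w v

namespace QT

/-- The same tree, as a labelled binary tree in the sense of `BT`. -/
def toBT : QT V → BT V
  | leaf v => .node v .nil .nil
  | node a l r => .node a l.toBT r.toBT

/-- `Good desc S D`: the tree `D` identifies the elements of the candidate set `S`. Since leaves
carry singletons, both answers to every query are possible. -/
def Good (desc : V → V → Prop) : Finset V → QT V → Prop
  | S, leaf v => S = {v}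
  | S, node a l r => Good desc (out desc a S) l ∧ Good desc (inn desc a S) r

/-- Cost of `D` used on `S`: the sum, over internal nodes, of the weight of the candidate set
reaching that node. -/
noncomputable def cost (desc : V → V → Prop) (w : V → ℕ) : Finset V → QT V → ℕ
  | _, leaf _ => 0
  | S, node a l r => wt w S + cost desc w (out desc a S) l + cost desc w (inn desc a S) r

/-- Height in edges. -/
def height : QT V → ℕ
  | leaf _ => 0
  | node _ l r => max l.height r.height + 1

/-- Number of internal nodes whose candidate set weighs more than `3/4` of `W`. -/
noncomputable def cnt (desc : V → V → Prop) (w : V → ℕ) (W : ℕ) : Finset V → QT V → ℕ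
  | _, leaf _ => 0
  | S, node a l r => (if 3 * W < 4 * wt w S then 1 else 0)
      + cnt desc w W (out desc a S) l + cnt desc w W (inn desc a S) r

end QT

open QT

/-- Every query separating two elements of `S` belongs to `S`. This holds for the candidate sets
arising during a search, and is inherited under both answers to a query. -/
def Conn (desc : V → V → Prop) (S : Finset V) : Prop :=
  ∀ a, (inn desc a S).Nonempty → (out desc a S).Nonempty → a ∈ S

/-- The properties of the descendance relation of a rooted tree whose nodes have at most `d`
children. -/
structure Lam (desc : V → V → Prop) (d : ℕ) : Prop where
  refl : ∀ a, desc a a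
  trans : ∀ {a b c}, desc a b → desc b c → desc a c
  antisymm : ∀ {a b}, desc a b → desc b a → a = b
  laminar : ∀ {a b x}, desc a x → desc b x → desc a b ∨ desc b a
  root : ∃ r, ∀ u, desc r u
  children : ∀ v, ∃ cs : List V, cs.length ≤ d ∧ (∀ c ∈ cs, desc v c ∧ c ≠ v) ∧
    ∀ u, desc v u → u ≠ v → ∃ c ∈ cs, desc c u

section basics
variable {desc : V → V → Prop} {w : V → ℕ}

lemma mem_inn {a x : V} {S : Finset V} : x ∈ inn desc a S ↔ x ∈ S ∧ desc a x := by
  simp [inn]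

lemma mem_out {a x : V} {S : Finset V} : x ∈ out desc a S ↔ x ∈ S ∧ ¬ desc a x := by
  simp [out]

lemma inn_subset (a : V) (S : Finset V) : inn desc a S ⊆ S := Finset.filter_subset _ _
lemma out_subset (a : V) (S : Finset V) : out desc a S ⊆ S := Finset.filter_subset _ _

lemma wt_split (a : V) (S : Finset V) :
    wt w (inn desc a S) + wt w (out desc a S) = wt w S :=
  Finset.sum_filter_add_sum_filter_not S _ _

lemma wt_mono {S S' : Finset V} (h : S ⊆ S') : wt w S ≤ wt w S' :=
  Finset.sum_le_sum_of_subset h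

lemma out_eq_of_inn {a : V} {S : Finset V} (h : ¬ (inn desc a S).Nonempty) :
    out desc a S = S := by
  rw [Finset.not_nonempty_iff_eq_empty] at h
  apply Finset.filter_true_of_mem
  intro x hx hd
  have : x ∈ inn desc a S := mem_inn.2 ⟨hx, hd⟩
  simp [h] at this

lemma inn_eq_of_out {a : V} {S : Finset V} (h : ¬ (out desc a S).Nonempty) :
    inn desc a S = S := by
  rw [Finset.not_nonempty_iff_eq_empty] at h
  apply Finset.filter_true_of_mem
  intro x hx
  by_contra hd
  have : x ∈ out desc a S := mem_out.2 ⟨hx, hd⟩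
  simp [h] at this

lemma Good.nonempty {S : Finset V} {D : QT V} (h : Good desc S D) : S.Nonempty := by
  induction D generalizing S with
  | leaf v => simp only [Good] at h; simp [h]
  | node a l r ihl ihr => exact (ihl h.1).mono (out_subset _ _)

lemma Conn.inn {d : ℕ} (L : Lam desc d) {S : Finset V} (h : Conn desc S) (a : V) :
    Conn desc (inn desc a S) := by
  rintro b ⟨x, hx⟩ ⟨y, hy⟩
  simp only [mem_inn, mem_out] at hx hy ⊢
  refine ⟨h b ⟨x, mem_inn.2 ⟨hx.1.1, hx.2⟩⟩ ⟨y, mem_out.2 ⟨hy.1.1, hy.2⟩⟩, ?_⟩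
  rcases L.laminar hx.1.2 hx.2 with h1 | h1
  · exact h1
  · exact absurd (L.trans h1 hy.1.2) hy.2

lemma Conn.out {d : ℕ} (L : Lam desc d) {S : Finset V} (h : Conn desc S) (a : V) :
    Conn desc (out desc a S) := by
  rintro b ⟨x, hx⟩ ⟨y, hy⟩
  simp only [mem_inn, mem_out] at hx hy ⊢
  exact ⟨h b ⟨x, mem_inn.2 ⟨hx.1.1, hx.2⟩⟩ ⟨y, mem_out.2 ⟨hy.1.1, hy.2⟩⟩,
    fun hab => hx.1.2 (L.trans hab hx.2)⟩

lemma cost_zero {S : Finset V} (D : QT V) (h : wt w S = 0) : cost desc w S D = 0 := by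
  induction D generalizing S with
  | leaf v => rfl
  | node a l r ihl ihr =>
    have := wt_split (desc := desc) (w := w) a S
    simp only [cost]
    rw [ihl (by omega), ihr (by omega), h]

end basics

/-! ### Passing between the two kinds of trees -/

section conversion
variable {desc : V → V → Prop} {w : V → ℕ}

lemma toBT_ne_nil (D : QT V) : D.toBT ≠ .nil := by cases D <;> simp [toBT]

lemma leafList_node {a : V} {l r : BT V} (h : ¬ (l = .nil ∧ r = .nil)) :
    (BT.node a l r).leafList = l.leafList ++ r.leafList := by
  cases l <;> cases r <;> simp_all [BT.leafList]

lemma height_node {a : V} {l r : BT V} (h : ¬ (l = .nil ∧ r = .nil)) :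
    (BT.node a l r).height = max l.height r.height + 1 := by
  cases l <;> cases r <;> simp_all [BT.height]

lemma leafDepths_node {a : V} {l r : BT V} (h : ¬ (l = .nil ∧ r = .nil)) :
    (BT.node a l r).leafDepths =
      (l.leafDepths ++ r.leafDepths).map (fun p => (p.1, p.2 + 1)) := by
  cases l <;> cases r <;> simp_all [BT.leafDepths]

lemma leafDepths_fst (D : BT V) : D.leafDepths.map Prod.fst = D.leafList := by
  induction D with
  | nil => rfl
  | node a l r ihl ihr =>
    by_cases h : l = .nil ∧ r = .nil
    · obtain ⟨rfl, rfl⟩ := h; rfl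
    · rw [leafDepths_node h, leafList_node h, ← ihl, ← ihr]
      simp [Function.comp_def]

lemma leafWeight_node {a : V} {l r : BT V} (h : ¬ (l = .nil ∧ r = .nil)) :
    (BT.node a l r).leafWeight w = l.leafWeight w + r.leafWeight w := by
  simp [BT.leafWeight, leafList_node h]

lemma sum_succ (w : V → ℕ) (L : List (V × ℕ)) :
    (L.map (fun p => (p.2 + 1) * w p.1)).sum =
      ((L.map Prod.fst).map w).sum + (L.map (fun p => p.2 * w p.1)).sum := by
  induction L with
  | nil => rfl
  | cons p L ih => simp only [List.map_cons, List.sum_cons, ih]; ring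

lemma cost_node {a : V} {l r : BT V} (h : ¬ (l = .nil ∧ r = .nil)) :
    (BT.node a l r).cost w = l.leafWeight w + r.leafWeight w + l.cost w + r.cost w := by
  have e : (BT.node a l r).cost w =
      (l.leafDepths.map (fun p => (p.2 + 1) * w p.1)).sum +
      (r.leafDepths.map (fun p => (p.2 + 1) * w p.1)).sum := by
    simp [BT.cost, leafDepths_node h, Function.comp_def]
  rw [e, sum_succ, sum_succ, leafDepths_fst, leafDepths_fst]
  simp only [BT.leafWeight, BT.cost]; ring

lemma leafList_subset_vals (D : BT V) : ∀ x ∈ D.leafList, x ∈ D.vals := by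
  induction D with
  | nil => simp [BT.leafList]
  | node a l r ihl ihr =>
    intro x hx
    by_cases h : l = .nil ∧ r = .nil
    · obtain ⟨rfl, rfl⟩ := h; simpa [BT.leafList, BT.vals] using hx
    · rw [leafList_node h, List.mem_append] at hx
      simp only [BT.vals, List.mem_cons, List.mem_append]
      rcases hx with hx | hx
      · exact .inr (.inl (ihl x hx))
      · exact .inr (.inr (ihr x hx))

lemma toBT_not_nil (l r : QT V) : ¬ (l.toBT = .nil ∧ r.toBT = .nil) :=
  fun h => toBT_ne_nil l h.1

lemma toBT_height (D : QT V) : D.toBT.height = D.height := by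
  induction D with
  | leaf v => rfl
  | node a l r ihl ihr =>
    rw [toBT, height_node (toBT_not_nil l r), ihl, ihr, QT.height]

lemma toBT_count [DecidableEq V] {S : Finset V} {D : QT V} (h : Good desc S D) (v : V) :
    D.toBT.leafList.count v = if v ∈ S then 1 else 0 := by
  induction D generalizing S with
  | leaf u =>
    simp only [Good] at h
    subst h
    simp only [toBT, BT.leafList, Finset.mem_singleton, List.count_singleton, beq_iff_eq]
    simp only [eq_comm]
  | node a l r ihl ihr =>
    rw [toBT, leafList_node (toBT_not_nil l r), List.count_append, ihl h.1, ihr h.2]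
    simp only [mem_inn, mem_out]
    by_cases h1 : v ∈ S <;> by_cases h2 : desc a v <;> simp [h1, h2]

lemma toBT_leafWeight {S : Finset V} {D : QT V} (h : Good desc S D) :
    D.toBT.leafWeight w = wt w S := by
  induction D generalizing S with
  | leaf u =>
    simp only [Good] at h
    subst h
    simp [toBT, BT.leafWeight, BT.leafList, wt]
  | node a l r ihl ihr =>
    rw [toBT, leafWeight_node (toBT_not_nil l r), ihl h.1, ihr h.2,
      ← wt_split (desc := desc) a S, add_comm]

lemma toBT_cost {S : Finset V} {D : QT V} (h : Good desc S D) :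
    D.toBT.cost w = cost desc w S D := by
  induction D generalizing S with
  | leaf u => simp [toBT, BT.cost, BT.leafDepths, QT.cost]
  | node a l r ihl ihr =>
    rw [toBT, cost_node (toBT_not_nil l r), ihl h.1, ihr h.2, toBT_leafWeight h.1,
      toBT_leafWeight h.2, QT.cost, ← wt_split (desc := desc) a S]
    ring

lemma toBT_search {d : ℕ} (L : Lam desc d) {S : Finset V} {D : QT V} (hS : Conn desc S)
    (h : Good desc S D) : BT.SearchProp desc D.toBT ∧ ∀ a ∈ D.toBT.vals, a ∈ S := by
  induction D generalizing S with
  | leaf u =>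
    simp only [Good] at h
    subst h
    simp [toBT, BT.SearchProp, BT.vals]
  | node a l r ihl ihr =>
    obtain ⟨l1, l2⟩ := ihl (hS.out L a) h.1
    obtain ⟨r1, r2⟩ := ihr (hS.inn L a) h.2
    refine ⟨⟨fun b hb => (mem_inn.1 (r2 b hb)).2, fun b hb => (mem_out.1 (l2 b hb)).2, l1, r1⟩, ?_⟩
    intro b hb
    simp only [toBT, BT.vals, List.mem_cons, List.mem_append] at hb
    rcases hb with rfl | hb | hb
    · exact hS b (Good.nonempty h.2) (Good.nonempty h.1)
    · exact out_subset _ _ (l2 b hb)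
    · exact inn_subset _ _ (r2 b hb)

/-- Bound for the cost of the restriction of a tree to a candidate set `P`: only the queries that
actually split what is left of `P` are charged. -/
noncomputable def restrCost (desc : V → V → Prop) (w : V → ℕ) : BT V → Finset V → ℕ
  | .nil, _ => 0
  | .node a l r, P =>
      (if (inn desc a P).Nonempty ∧ (out desc a P).Nonempty then wt w P else 0)
        + restrCost desc w l (out desc a P) + restrCost desc w r (inn desc a P)

lemma leaves_split {a : V} {l r : BT V} (h : ¬ (l = .nil ∧ r = .nil))
    (hD : BT.SearchProp desc (.node a l r)) {P : Finset V}
    (hP : ∀ p ∈ P, p ∈ (BT.node a l r).leafList) :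
    (∀ p ∈ out desc a P, p ∈ l.leafList) ∧ (∀ p ∈ inn desc a P, p ∈ r.leafList) := by
  rw [leafList_node h] at hP
  constructor
  · intro p hp
    rw [mem_out] at hp
    rcases List.mem_append.1 (hP p hp.1) with h1 | h1
    · exact h1
    · exact absurd (hD.1 p (leafList_subset_vals _ _ h1)) hp.2
  · intro p hp
    rw [mem_inn] at hp
    rcases List.mem_append.1 (hP p hp.1) with h1 | h1
    · exact absurd hp.2 (hD.2.1 p (leafList_subset_vals _ _ h1))
    · exact h1

/-- Skipping the queries that do not split `P` turns a search tree into one for `P`. -/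
lemma exists_restr (D : BT V) (hD : BT.SearchProp desc D) (P : Finset V) (hne : P.Nonempty)
    (hP : ∀ p ∈ P, p ∈ D.leafList) :
    ∃ Q : QT V, Good desc P Q ∧ cost desc w P Q ≤ restrCost desc w D P := by
  induction D generalizing P with
  | nil => obtain ⟨p, hp⟩ := hne; simpa [BT.leafList] using hP p hp
  | node a l r ihl ihr =>
    by_cases h : l = .nil ∧ r = .nil
    · obtain ⟨rfl, rfl⟩ := h
      refine ⟨.leaf a, ?_, by simp [QT.cost]⟩
      simp only [BT.leafList, List.mem_singleton] at hP
      exact Finset.eq_singleton_iff_nonempty_unique_mem.2 ⟨hne, hP⟩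
    · obtain ⟨hl, hr⟩ := leaves_split h hD hP
      by_cases hi : (inn desc a P).Nonempty
      · by_cases ho : (out desc a P).Nonempty
        · obtain ⟨Ql, gl, cl⟩ := ihl hD.2.2.1 _ ho hl
          obtain ⟨Qr, gr, cr⟩ := ihr hD.2.2.2 _ hi hr
          refine ⟨.node a Ql Qr, ⟨gl, gr⟩, ?_⟩
          simp only [QT.cost, restrCost, hi, ho, and_self, if_true]
          omega
        · obtain ⟨Qr, gr, cr⟩ := ihr hD.2.2.2 _ hi hr
          simp only [restrCost]
          rw [inn_eq_of_out ho] at gr cr ⊢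
          exact ⟨Qr, gr, by omega⟩
      · have e := out_eq_of_inn hi
        obtain ⟨Ql, gl, cl⟩ := ihl hD.2.2.1 _ (e.symm ▸ hne) hl
        simp only [restrCost]
        rw [e] at gl cl ⊢
        exact ⟨Ql, gl, by omega⟩

lemma wt_le_leafWeight (D : BT V) (P : Finset V) (hP : ∀ p ∈ P, p ∈ D.leafList) :
    wt w P ≤ D.leafWeight w := by
  rw [BT.leafWeight, Finset.sum_list_map_count]
  calc wt w P ≤ ∑ m ∈ D.leafList.toFinset, w m :=
        Finset.sum_le_sum_of_subset (fun p hp => List.mem_toFinset.2 (hP p hp))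
    _ ≤ _ := Finset.sum_le_sum (fun m hm => by
        have : 0 < D.leafList.count m := List.count_pos_iff.2 (List.mem_toFinset.1 hm)
        rw [smul_eq_mul]
        exact Nat.le_mul_of_pos_left _ this)

lemma restrCost_le (D : BT V) (hD : BT.SearchProp desc D) (P : Finset V)
    (hP : ∀ p ∈ P, p ∈ D.leafList) : restrCost desc w D P ≤ D.cost w := by
  induction D generalizing P with
  | nil => simp [restrCost]
  | node a l r ihl ihr =>
    by_cases h : l = .nil ∧ r = .nil
    · obtain ⟨rfl, rfl⟩ := h
      simp only [BT.leafList, List.mem_singleton] at hP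
      have : ¬ ((inn desc a P).Nonempty ∧ (out desc a P).Nonempty) := by
        rintro ⟨⟨x, hx⟩, ⟨y, hy⟩⟩
        rw [mem_inn] at hx
        rw [mem_out] at hy
        have h1 := hP x hx.1
        have h2 := hP y hy.1
        subst h1
        subst h2
        exact hy.2 hx.2
      simp [restrCost, this]
    · obtain ⟨hl, hr⟩ := leaves_split h hD hP
      have h1 := ihl hD.2.2.1 _ hl
      have h2 := ihr hD.2.2.2 _ hr
      have h3 := wt_le_leafWeight (w := w) _ P hP
      rw [leafWeight_node h] at h3
      rw [cost_node h, restrCost]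
      split_ifs <;> omega

end conversion

/-! ### Splitting a candidate set by a sequence of queries -/

section pieces
variable {desc : V → V → Prop} {w : V → ℕ}

/-- The parts into which `S` is cut by asking the queries `qs` one after the other, stopping at the
first positive answer. -/
noncomputable def pieces (desc : V → V → Prop) : List V → Finset V → List (Finset V)
  | [], S => [S]
  | q :: qs, S => inn desc q S :: pieces desc qs (out desc q S)

lemma pieces_subset (qs : List V) (S : Finset V) : ∀ P ∈ pieces desc qs S, P ⊆ S := by
  induction qs generalizing S with
  | nil => simp [pieces]
  | cons q qs ih =>
    intro P hP
    simp only [pieces, List.mem_cons] at hP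
    rcases hP with rfl | hP
    · exact inn_subset _ _
    · exact (ih _ P hP).trans (out_subset _ _)

lemma pieces_conn {d : ℕ} (L : Lam desc d) (qs : List V) (S : Finset V) (hS : Conn desc S) :
    ∀ P ∈ pieces desc qs S, Conn desc P := by
  induction qs generalizing S with
  | nil => simpa [pieces] using hS
  | cons q qs ih =>
    intro P hP
    simp only [pieces, List.mem_cons] at hP
    rcases hP with rfl | hP
    · exact hS.inn L q
    · exact ih _ (hS.out L q) P hP

lemma pieces_disjoint (qs : List V) (S : Finset V) :
    (pieces desc qs S).Pairwise Disjoint := by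
  induction qs generalizing S with
  | nil => simp [pieces]
  | cons q qs ih =>
    refine List.Pairwise.cons ?_ (ih _)
    intro P hP
    refine Finset.disjoint_left.2 fun x hx hx' => ?_
    exact (mem_out.1 (pieces_subset _ _ P hP hx')).2 (mem_inn.1 hx).2

/-- Trees for the pieces can be combined into a tree for the whole set, at the price of the queries
that produce the pieces. -/
lemma assemble (qs : List V) (S : Finset V) (hS : S.Nonempty) (F : Finset V → QT V) (H : ℕ)
    (hF : ∀ P ∈ pieces desc qs S, P.Nonempty → Good desc P (F P) ∧ (F P).height ≤ H) :
    ∃ D : QT V, Good desc S D ∧ D.height ≤ qs.length + H ∧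
      cost desc w S D ≤ qs.length * wt w S +
        ((pieces desc qs S).map
          (fun P => if P.Nonempty then cost desc w P (F P) else 0)).sum := by
  induction qs generalizing S with
  | nil =>
    have := hF S (by simp [pieces]) hS
    exact ⟨F S, this.1, by simpa using this.2, by simp [pieces, hS]⟩
  | cons q qs ih =>
    simp only [pieces, List.mem_cons, forall_eq_or_imp] at hF
    simp only [pieces, List.map_cons, List.sum_cons, List.length_cons]
    by_cases ho : (out desc q S).Nonempty
    · obtain ⟨D, g, h, c⟩ := ih _ ho hF.2
      have hw := wt_mono (w := w) (out_subset (desc := desc) q S)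
      have hw' := Nat.mul_le_mul_left qs.length hw
      by_cases hi : (inn desc q S).Nonempty
      · obtain ⟨g', h'⟩ := hF.1 hi
        refine ⟨.node q D (F _), ⟨g, g'⟩, ?_, ?_⟩
        · simp only [QT.height]; omega
        · simp only [QT.cost, if_pos hi]
          rw [add_mul]
          omega
      · rw [out_eq_of_inn hi] at g c ⊢
        refine ⟨D, g, by omega, ?_⟩
        rw [add_mul]
        omega
    · have e := inn_eq_of_out ho
      rw [e] at hF ⊢
      obtain ⟨g', h'⟩ := hF.1 hS
      exact ⟨F S, g', by omega, by rw [if_pos hS]; omega⟩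

lemma pieces_append (cs qs : List V) (S : Finset V) :
    ∀ P ∈ pieces desc (cs ++ qs) S, (∃ c ∈ cs, P ⊆ inn desc c S) ∨
      ∃ S' ⊆ S, (∀ c ∈ cs, ∀ x ∈ S', ¬ desc c x) ∧ P ∈ pieces desc qs S' := by
  induction cs generalizing S with
  | nil => intro P hP; exact .inr ⟨S, subset_rfl, by simp, hP⟩
  | cons c cs ih =>
    intro P hP
    simp only [List.cons_append, pieces, List.mem_cons] at hP
    rcases hP with rfl | hP
    · exact .inl ⟨c, by simp, subset_rfl⟩
    · rcases ih _ P hP with ⟨c', hc', h⟩ | ⟨S', hS', h, hP'⟩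
      · exact .inl ⟨c', by simp [hc'], h.trans (Finset.filter_subset_filter _ (out_subset _ _))⟩
      · refine .inr ⟨S', hS'.trans (out_subset _ _), ?_, hP'⟩
        intro e he x hx
        rcases List.mem_cons.1 he with rfl | he
        · exact (mem_out.1 (hS' hx)).2
        · exact h e he x hx

/-- Querying the children of a weighted centroid, and then the centroid itself, leaves only parts
that are trivial or have at most half of the weight. -/
lemma centroid [Fintype V] {d : ℕ} (L : Lam desc d) (w : V → ℕ) (S : Finset V) :
    ∃ qs : List V, qs.length ≤ d + 1 ∧
      ∀ P ∈ pieces desc qs S, P.card ≤ 1 ∨ 2 * wt w P ≤ wt w S := by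
  classical
  have hex : (Finset.univ.filter (fun v => wt w S ≤ 2 * wt w (inn desc v S))).Nonempty := by
    obtain ⟨r, hr⟩ := L.root
    refine ⟨r, ?_⟩
    have : inn desc r S = S := Finset.filter_true_of_mem (fun x _ => hr x)
    simp only [Finset.mem_filter, Finset.mem_univ, true_and, this]
    omega
  obtain ⟨v, hv, hmin⟩ := Finset.exists_min_image _
    (fun v => (inn desc v Finset.univ).card) hex
  simp only [Finset.mem_filter, Finset.mem_univ, true_and] at hv hmin
  obtain ⟨cs, hlen, hcs, hcov⟩ := L.children v
  refine ⟨cs ++ [v], by simpa using hlen, fun P hP => ?_⟩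
  rcases pieces_append cs [v] S P hP with ⟨c, hc, hPc⟩ | ⟨S', hS', hout, hP'⟩
  · right
    by_contra hcon
    have h1 := wt_mono (w := w) hPc
    have h2 := hmin c (by omega)
    have h3 : inn desc c Finset.univ ⊂ inn desc v Finset.univ := by
      refine Finset.ssubset_iff_subset_ne.2 ⟨fun x hx => ?_, fun he => ?_⟩
      · exact mem_inn.2 ⟨Finset.mem_univ _, L.trans (hcs c hc).1 (mem_inn.1 hx).2⟩
      · have : v ∈ inn desc c Finset.univ := he ▸ mem_inn.2 ⟨Finset.mem_univ _, L.refl v⟩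
        exact (hcs c hc).2 (L.antisymm (mem_inn.1 this).2 (hcs c hc).1)
    have := Finset.card_lt_card h3
    omega
  · simp only [pieces, List.mem_cons, List.not_mem_nil, or_false] at hP'
    rcases hP' with rfl | rfl
    · left
      have key : ∀ x ∈ inn desc v S', x = v := by
        intro x hx
        rw [mem_inn] at hx
        by_contra hne
        obtain ⟨c, hc, hcx⟩ := hcov x hx.2 hne
        exact hout c hc x hx.1 hcx
      exact Finset.card_le_one.2 fun x hx y hy => (key x hx).trans (key y hy).symm
    · right
      have h1 : out desc v S' ⊆ out desc v S := Finset.filter_subset_filter _ hS'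
      have h2 := wt_mono (w := w) h1
      have h3 := wt_split (desc := desc) (w := w) v S
      omega

/-- Repeated centroid splitting with respect to cardinality gives a tree of logarithmic height. -/
lemma exists_balanced [Fintype V] {d : ℕ} (L : Lam desc d) (j : ℕ) (S : Finset V)
    (hS : S.Nonempty) (hj : S.card ≤ 2 ^ j) :
    ∃ D : QT V, Good desc S D ∧ D.height ≤ (d + 1) * j := by
  induction j generalizing S with
  | zero =>
    obtain ⟨v, rfl⟩ := Finset.card_eq_one.1
      (le_antisymm (by simpa using hj) (Finset.card_pos.2 hS))
    exact ⟨.leaf v, rfl, by simp [QT.height]⟩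
  | succ j ih =>
    obtain ⟨qs, hlen, hq⟩ := centroid L (fun _ => 1) S
    have hwt : ∀ P : Finset V, wt (fun _ => 1) P = P.card := fun P => by simp [wt]
    simp only [hwt] at hq
    have hp : ∀ P : Finset V, ∃ D : QT V, P ∈ pieces desc qs S → P.Nonempty →
        Good desc P D ∧ D.height ≤ (d + 1) * j := by
      intro P
      by_cases h : P ∈ pieces desc qs S ∧ P.Nonempty
      · have hc : P.card ≤ 2 ^ j := by
          have := Nat.one_le_two_pow (n := j)
          rw [pow_succ] at hj
          rcases hq P h.1 with h1 | h1 <;> omega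
        obtain ⟨D, hD⟩ := ih P h.2 hc
        exact ⟨D, fun _ _ => hD⟩
      · obtain ⟨x, -⟩ := hS
        exact ⟨.leaf x, fun h1 h2 => absurd ⟨h1, h2⟩ h⟩
    choose F hF using hp
    obtain ⟨D, g, h, -⟩ := assemble (w := fun _ => 0) qs S hS F _ hF
    exact ⟨D, g, by rw [mul_add]; omega⟩

end pieces

/-! ### Heavy nodes of an optimal tree -/

section heavy
variable {desc : V → V → Prop} {w : V → ℕ}

/-- A query splits at most one of several disjoint candidate sets. -/
lemma split_sum_le (a : V) (B : ℕ) (Ps : List (Finset V)) (hd : Ps.Pairwise Disjoint)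
    (hc : ∀ P ∈ Ps, Conn desc P)
    (hB : ∀ P ∈ Ps, (inn desc a P).Nonempty → (out desc a P).Nonempty → wt w P ≤ B) :
    (Ps.map (fun P => if (inn desc a P).Nonempty ∧ (out desc a P).Nonempty
      then wt w P else 0)).sum ≤ B := by
  induction Ps with
  | nil => simp
  | cons P Ps ih =>
    rw [List.pairwise_cons] at hd
    simp only [List.mem_cons, forall_eq_or_imp] at hc hB
    rw [List.map_cons, List.sum_cons]
    by_cases h : (inn desc a P).Nonempty ∧ (out desc a P).Nonempty
    · have hz : (Ps.map (fun P => if (inn desc a P).Nonempty ∧ (out desc a P).Nonempty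
          then wt w P else 0)).sum = 0 := by
        apply List.sum_eq_zero
        intro x hx
        obtain ⟨P', hP', rfl⟩ := List.mem_map.1 hx
        rw [if_neg]
        intro h'
        exact Finset.disjoint_left.1 (hd.1 P' hP') (hc.1 a h.1 h.2)
          (hc.2 P' hP' a h'.1 h'.2)
      rw [hz, if_pos h]
      simpa using hB.1 h.1 h.2
    · rw [if_neg h, zero_add]
      exact ih hd.2 hc.2 hB.2

lemma restr_sum_node (a : V) (l r : BT V) (Ps : List (Finset V)) :
    (Ps.map (restrCost desc w (.node a l r))).sum =
      (Ps.map (fun P => if (inn desc a P).Nonempty ∧ (out desc a P).Nonempty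
        then wt w P else 0)).sum
      + ((Ps.map (out desc a)).map (restrCost desc w l)).sum
      + ((Ps.map (inn desc a)).map (restrCost desc w r)).sum := by
  induction Ps with
  | nil => rfl
  | cons P Ps ih =>
    simp only [List.map_cons, List.sum_cons, restrCost] at ih ⊢
    rw [ih]
    ring

/-- Restricting a tree to disjoint light candidate sets saves at least `W / 4` at each node whose
candidate set is heavier than `3 W / 4`: there, only one of the sets is split, and its weight is at
most `W / 2`. -/
lemma savings {d : ℕ} (L : Lam desc d) (W : ℕ) (D : QT V) (S : Finset V) (hD : Good desc S D)
    (Ps : List (Finset V)) (hd : Ps.Pairwise Disjoint) (hc : ∀ P ∈ Ps, Conn desc P)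
    (hs : ∀ P ∈ Ps, P ⊆ S) (hl : ∀ P ∈ Ps, P.card ≤ 1 ∨ 2 * wt w P ≤ W) :
    4 * (Ps.map (restrCost desc w D.toBT)).sum + W * cnt desc w W S D
      ≤ 4 * cost desc w S D := by
  induction D generalizing S Ps with
  | leaf v =>
    have hz : (Ps.map (restrCost desc w (QT.leaf v).toBT)).sum = 0 := by
      apply List.sum_eq_zero
      intro x hx
      obtain ⟨P, hP, rfl⟩ := List.mem_map.1 hx
      have hsub : P ⊆ {v} := by simpa only [show S = {v} from hD] using hs P hP
      have h0 := restrCost_le (desc := desc) (w := w) (QT.leaf v).toBT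
        (by simp [toBT, BT.SearchProp, BT.vals]) P
        (fun p hp => by simpa [toBT, BT.leafList] using hsub hp)
      simpa [toBT, BT.cost, BT.leafDepths] using h0
    simp [hz, QT.cost, QT.cnt]
  | node a l r ihl ihr =>
    have hwl : ∀ {P Q : Finset V}, Q ⊆ P → (P.card ≤ 1 ∨ 2 * wt w P ≤ W) →
        (Q.card ≤ 1 ∨ 2 * wt w Q ≤ W) := by
      intro P Q h h'
      have h1 := Finset.card_le_card h
      have h2 := wt_mono (w := w) h
      omega
    have il := ihl (out desc a S) hD.1 (Ps.map (out desc a))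
      (hd.map _ fun P Q h => h.mono (out_subset _ _) (out_subset _ _))
      (List.forall_mem_map.2 fun P hP => (hc P hP).out L a)
      (List.forall_mem_map.2 fun P hP => Finset.filter_subset_filter _ (hs P hP))
      (List.forall_mem_map.2 fun P hP => hwl (out_subset a P) (hl P hP))
    have ir := ihr (inn desc a S) hD.2 (Ps.map (inn desc a))
      (hd.map _ fun P Q h => h.mono (inn_subset _ _) (inn_subset _ _))
      (List.forall_mem_map.2 fun P hP => (hc P hP).inn L a)
      (List.forall_mem_map.2 fun P hP => Finset.filter_subset_filter _ (hs P hP))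
      (List.forall_mem_map.2 fun P hP => hwl (inn_subset a P) (hl P hP))
    have hB := split_sum_le (w := w) a (min (wt w S) (W / 2)) Ps hd hc (by
      intro P hP hi ho
      have h1 := wt_mono (w := w) (hs P hP)
      have h2 : ¬ P.card ≤ 1 := by
        intro h2
        obtain ⟨x, hx⟩ := hi
        obtain ⟨y, hy⟩ := ho
        rw [mem_inn] at hx
        rw [mem_out] at hy
        exact hy.2 (Finset.card_le_one.1 h2 x hx.1 y hy.1 ▸ hx.2)
      have h3 := hl P hP
      omega)
    rw [toBT, restr_sum_node]
    simp only [QT.cost, QT.cnt, mul_add]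
    split_ifs with h <;> omega

/-- An optimal tree has at most `4 (d + 1)` heavy internal nodes: otherwise splitting at a weighted
centroid first would be cheaper. -/
lemma cnt_le [Fintype V] {d : ℕ} (L : Lam desc d) (S : Finset V) (hS : Conn desc S) (D : QT V)
    (hD : Good desc S D) (hopt : ∀ D', Good desc S D' → cost desc w S D ≤ cost desc w S D')
    (hpos : 0 < wt w S) : cnt desc w (wt w S) S D ≤ 4 * (d + 1) := by
  classical
  obtain ⟨qs, hlen, hq⟩ := centroid L w S
  have hleaf : ∀ p ∈ S, p ∈ D.toBT.leafList := by
    intro p hp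
    have := toBT_count hD p
    rw [if_pos hp] at this
    exact List.count_pos_iff.1 (by omega)
  have hp : ∀ P : Finset V, ∃ Q : QT V, P ∈ pieces desc qs S → P.Nonempty →
      Good desc P Q ∧ cost desc w P Q ≤ restrCost desc w D.toBT P := by
    intro P
    by_cases h : P ∈ pieces desc qs S ∧ P.Nonempty
    · obtain ⟨Q, hQ⟩ := exists_restr (w := w) D.toBT (toBT_search L hS hD).1 P h.2
        (fun p hp => hleaf p (pieces_subset _ _ P h.1 hp))
      exact ⟨Q, fun _ _ => hQ⟩
    · exact ⟨D, fun h1 h2 => absurd ⟨h1, h2⟩ h⟩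
  choose F hF using hp
  obtain ⟨H, hH⟩ : ∃ H, ∀ P ∈ pieces desc qs S, (F P).height ≤ H := by
    refine ⟨((pieces desc qs S).map fun P => (F P).height).sum, fun P hP => ?_⟩
    exact List.le_sum_of_mem (List.mem_map_of_mem hP)
  obtain ⟨D', g, -, c⟩ := assemble (w := w) qs S (Good.nonempty hD) F H
    (fun P hP hne => ⟨(hF P hP hne).1, hH P hP⟩)
  have h1 := hopt D' g
  have h2 : ((pieces desc qs S).map
      (fun P => if P.Nonempty then cost desc w P (F P) else 0)).sum ≤
      ((pieces desc qs S).map (restrCost desc w D.toBT)).sum := by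
    apply List.sum_le_sum
    intro P hP
    split_ifs with h
    · exact (hF P hP h).2
    · exact Nat.zero_le _
  have h3 := savings L (wt w S) D S hD (pieces desc qs S) (pieces_disjoint _ _)
    (pieces_conn L _ _ hS) (pieces_subset _ _) hq
  have h4 := Nat.mul_le_mul_right (wt w S) hlen
  have h5 : wt w S * cnt desc w (wt w S) S D ≤ wt w S * (4 * (d + 1)) := by
    have : wt w S * (4 * (d + 1)) = 4 * ((d + 1) * wt w S) := by ring
    omega
  exact Nat.le_of_mul_le_mul_left h5 hpos

/-- `D` has minimum cost among the trees identifying the elements of `S`. -/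
def Opt (desc : V → V → Prop) (w : V → ℕ) (S : Finset V) (D : QT V) : Prop :=
  Good desc S D ∧ ∀ D', Good desc S D' → cost desc w S D ≤ cost desc w S D'

lemma Opt.left {S : Finset V} {a : V} {l r : QT V} (h : Opt desc w S (.node a l r)) :
    Opt desc w (out desc a S) l := by
  refine ⟨h.1.1, fun D' h' => ?_⟩
  have := h.2 (.node a D' r) ⟨h', h.1.2⟩
  simp only [QT.cost] at this
  omega

lemma Opt.right {S : Finset V} {a : V} {l r : QT V} (h : Opt desc w S (.node a l r)) :
    Opt desc w (inn desc a S) r := by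
  refine ⟨h.1.2, fun D' h' => ?_⟩
  have := h.2 (.node a l D') ⟨h.1.1, h'⟩
  simp only [QT.cost] at this
  omega

/-- If the light subtrees of an optimal tree can be replaced by trees of height at most `H`, then
the whole tree can be replaced by one whose height exceeds `H` by at most the number of heavy
nodes. -/
lemma replace_light {d : ℕ} (L : Lam desc d) (W H : ℕ)
    (ih : ∀ S D, Conn desc S → Opt desc w S D → 4 * wt w S ≤ 3 * W →
      ∃ D', Good desc S D' ∧ cost desc w S D' ≤ cost desc w S D ∧ D'.height ≤ H)
    (D : QT V) (S : Finset V) (hS : Conn desc S) (hD : Opt desc w S D) :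
    ∃ D', Good desc S D' ∧ cost desc w S D' ≤ cost desc w S D ∧
      D'.height ≤ cnt desc w W S D + H := by
  induction D generalizing S with
  | leaf v => exact ⟨.leaf v, hD.1, le_rfl, by simp [QT.height]⟩
  | node a l r ihl ihr =>
    by_cases hW : 3 * W < 4 * wt w S
    · obtain ⟨l', gl, cl, hl⟩ := ihl _ (hS.out L a) hD.left
      obtain ⟨r', gr, cr, hr⟩ := ihr _ (hS.inn L a) hD.right
      refine ⟨.node a l' r', ⟨gl, gr⟩, ?_, ?_⟩
      · simp only [QT.cost]; omega
      · simp only [QT.height, QT.cnt, if_pos hW]; omega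
    · obtain ⟨D', g, c, h⟩ := ih S _ hS hD (by omega)
      exact ⟨D', g, c, by omega⟩

/-- An optimal tree for a candidate set of weight less than `(4 / 3) ^ m` can be replaced by one of
height at most `4 (d + 1) m + (d + 1) j`, where `2 ^ j` bounds the number of nodes. -/
lemma exists_low [Fintype V] {d : ℕ} (L : Lam desc d) (j m : ℕ) (hj : Fintype.card V ≤ 2 ^ j)
    (S : Finset V) (D : QT V) (hS : Conn desc S) (hD : Opt desc w S D)
    (hm : wt w S * 3 ^ m < 4 ^ m) :
    ∃ D', Good desc S D' ∧ cost desc w S D' ≤ cost desc w S D ∧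
      D'.height ≤ 4 * (d + 1) * m + (d + 1) * j := by
  induction m generalizing S D with
  | zero =>
    obtain ⟨D', g, h⟩ := exists_balanced L j S (Good.nonempty hD.1)
      ((Finset.card_le_univ S).trans hj)
    refine ⟨D', g, ?_, by omega⟩
    rw [cost_zero D' (by simpa using hm)]
    exact Nat.zero_le _
  | succ m ih =>
    rcases Nat.eq_zero_or_pos (wt w S) with h0 | hpos
    · obtain ⟨D', g, c, h⟩ := ih S D hS hD (by simp [h0])
      exact ⟨D', g, c, h.trans (by gcongr; omega)⟩
    · obtain ⟨D', g, c, h⟩ := replace_light (w := w) L (wt w S) _ (fun S' D' hS' hD' hlight =>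
        ih S' D' hS' hD' (by
          have := Nat.mul_le_mul_right (3 ^ m) hlight
          rw [pow_succ, pow_succ] at hm
          nlinarith)) D S hS hD
      refine ⟨D', g, c, h.trans ?_⟩
      have := cnt_le L S hS D hD.1 hD.2 hpos
      have e : 4 * (d + 1) * (m + 1) = 4 * (d + 1) * m + 4 * (d + 1) := by ring
      rw [e]
      omega

end heavy

/-! ### Rooted trees -/

section tree
variable (T : RTree)

lemma iterate_root (k : ℕ) : T.parent^[k] T.root = T.root :=
  Function.iterate_fixed T.parent_root k

lemma anc_antisymm {a b : Fin T.n} (h : T.anc a b) (h' : T.anc b a) : a = b := by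
  obtain ⟨k, hk⟩ := h
  obtain ⟨m, hm⟩ := h'
  rcases Nat.eq_zero_or_pos (m + k) with h0 | hpos
  · obtain rfl : k = 0 := by omega
    simpa using hk.symm
  · -- A node on a cycle of the parent map can only be the root.
    obtain ⟨j, hj⟩ := T.reach b
    have hper : T.parent^[m + k] b = b := by rw [Function.iterate_add_apply, hk, hm]
    have h1 : T.parent^[(m + k) * j] b = b := by
      rw [Function.iterate_mul]; exact Function.iterate_fixed hper j
    have h2 : (m + k) * j = ((m + k) * j - j) + j := by
      have : j ≤ (m + k) * j := Nat.le_mul_of_pos_left _ hpos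
      omega
    rw [h2, Function.iterate_add_apply, hj, iterate_root] at h1
    rw [← hk, ← h1, iterate_root]

lemma anc_lam : Lam T.anc T.maxDegree where
  refl a := ⟨0, rfl⟩
  trans := by
    rintro a b c ⟨k, hk⟩ ⟨m, hm⟩
    exact ⟨k + m, by rw [Function.iterate_add_apply, hm, hk]⟩
  antisymm := anc_antisymm T
  laminar := by
    rintro a b x ⟨k, hk⟩ ⟨m, hm⟩
    rcases le_total k m with h | h
    · refine .inr ⟨m - k, ?_⟩
      rw [← hk, ← Function.iterate_add_apply, Nat.sub_add_cancel h, hm]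
    · refine .inl ⟨k - m, ?_⟩
      rw [← hm, ← Function.iterate_add_apply, Nat.sub_add_cancel h, hk]
  root := ⟨T.root, T.reach⟩
  children v := by
    refine ⟨(Finset.univ.filter (fun u => T.parent u = v ∧ u ≠ v)).toList, ?_, ?_, ?_⟩
    · rw [Finset.length_toList]
      have h1 : T.degree v ≤ T.maxDegree := Finset.le_sup (Finset.mem_univ v)
      have h2 : (Finset.univ.filter (fun u => T.parent u = v ∧ u ≠ v)).card ≤ T.degree v :=
        Nat.le_add_right _ _
      exact h2.trans h1
    · intro c hc
      simp only [Finset.mem_toList, Finset.mem_filter, Finset.mem_univ, true_and] at hc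
      exact ⟨⟨1, hc.1⟩, hc.2⟩
    · intro u hu hne
      classical
      have hu' : ∃ k, T.parent^[k] u = v := hu
      obtain ⟨k, hk⟩ : ∃ k, Nat.find hu' = k + 1 := by
        refine Nat.exists_eq_succ_of_ne_zero fun h0 => hne ?_
        simpa [h0] using Nat.find_spec hu'
      have hspec := Nat.find_spec hu'
      rw [hk, Function.iterate_succ_apply'] at hspec
      refine ⟨T.parent^[k] u, ?_, k, rfl⟩
      simp only [Finset.mem_toList, Finset.mem_filter, Finset.mem_univ, true_and]
      exact ⟨hspec, Nat.find_min hu' (by omega)⟩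

lemma conn_univ : Conn T.anc Finset.univ := fun _ _ _ => Finset.mem_univ _

lemma exists_opt (w : Fin T.n → ℕ) : ∃ D, Opt T.anc w Finset.univ D := by
  obtain ⟨D₀, h₀, -⟩ := exists_balanced (anc_lam T) (Fintype.card (Fin T.n)) Finset.univ
    ⟨T.root, Finset.mem_univ _⟩ Nat.lt_two_pow_self.le
  obtain ⟨D, hD, hmin⟩ := WellFounded.has_min
    (InvImage.wf (cost T.anc w Finset.univ) Nat.lt_wfRel.wf) {D | Good T.anc Finset.univ D} ⟨D₀, h₀⟩
  exact ⟨D, hD, fun D' h' => not_lt.1 (hmin D' h')⟩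

lemma toBT_isOptimal (w : Fin T.n → ℕ) {D : QT (Fin T.n)} (hD : Opt T.anc w Finset.univ D) :
    T.IsOptimal w D.toBT := by
  refine ⟨⟨fun v => ?_, (toBT_search (anc_lam T) (conn_univ T) hD.1).1⟩, fun D' hD' => ?_⟩
  · simpa using toBT_count hD.1 v
  · have hleaf : ∀ p ∈ (Finset.univ : Finset (Fin T.n)), p ∈ D'.leafList := fun p _ =>
      List.count_pos_iff.1 (by rw [hD'.1 p]; exact one_pos)
    obtain ⟨Q, g, c⟩ := exists_restr (w := w) D' hD'.2 Finset.univ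
      ⟨T.root, Finset.mem_univ _⟩ hleaf
    rw [toBT_cost hD.1]
    exact (hD.2 Q g).trans (c.trans (restrCost_le D' hD'.2 _ hleaf))

lemma maxDegree_pos (hn : 2 ≤ T.n) : 1 ≤ T.maxDegree := by
  obtain ⟨v, hv⟩ : ∃ v : Fin T.n, v ≠ T.root := by
    have : Nontrivial (Fin T.n) := Fin.nontrivial_iff_two_le.2 hn
    exact exists_ne _
  have h1 : T.degree v ≤ T.maxDegree := Finset.le_sup (Finset.mem_univ v)
  have h2 : 1 ≤ T.degree v := by simp [RTree.degree, hv]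
  omega

end tree

lemma log_succ_le (k : ℕ) (x : ℝ) (hx : 2 ≤ x) (hk : (k : ℝ) ≤ x) :
    ((Nat.log 2 k + 1 : ℕ) : ℝ) ≤ 2 * Real.logb 2 x := by
  have h1 : 1 ≤ Real.logb 2 x := by
    rw [Real.le_logb_iff_rpow_le (by norm_num) (by linarith)]; simpa using hx
  have h2 : (Nat.log 2 k : ℝ) ≤ Real.logb 2 x := by
    rcases Nat.eq_zero_or_pos k with rfl | hk0
    · simp; linarith
    · rw [Real.le_logb_iff_rpow_le (by norm_num) (by linarith), Real.rpow_natCast]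
      refine le_trans ?_ hk
      exact_mod_cast Nat.pow_log_le_self 2 hk0.ne'
  push_cast
  linarith

end SearchHeight

open SearchHeight in
/-- There is a universal constant `C` such that for every tree `T` with `n ≥ 2` nodes and
nonnegative integer weights `w` there is an optimal search tree for `(T,w)` of height at
most `C·Δ(T)·(log₂(w(T)+2) + log₂ n)`. -/
theorem statement5 :
    ∃ C : ℝ, 0 < C ∧
      ∀ (T : RTree) (w : Fin T.n → ℕ), 2 ≤ T.n →
        ∃ D : BT (Fin T.n), T.IsOptimal w D ∧
          (D.height : ℝ) ≤ C * (T.maxDegree : ℝ) *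
            (Real.logb 2 ((T.wsum w Finset.univ : ℝ) + 2) + Real.logb 2 (T.n : ℝ)) := by
  refine ⟨48, by norm_num, fun T w hn => ?_⟩
  obtain ⟨D, hD⟩ := exists_opt T w
  set W := T.wsum w Finset.univ with hW
  set i := Nat.log 2 W + 1 with hi
  set j := Nat.log 2 T.n + 1 with hj
  have hWi : W < 2 ^ i := Nat.lt_pow_succ_log_self (by norm_num) W
  have hnj : T.n < 2 ^ j := Nat.lt_pow_succ_log_self (by norm_num) T.n
  -- Three steps halve the weight, because `(3 / 4) ^ 3 ≤ 1 / 2`.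
  have hm : wt w Finset.univ * 3 ^ (3 * i) < 4 ^ (3 * i) := by
    calc W * 3 ^ (3 * i) < 2 ^ i * 3 ^ (3 * i) := by gcongr
      _ = 54 ^ i := by rw [pow_mul, ← mul_pow]; norm_num
      _ ≤ 64 ^ i := Nat.pow_le_pow_left (by norm_num) i
      _ = 4 ^ (3 * i) := by rw [pow_mul]; norm_num
  obtain ⟨D', g, c, h⟩ := exists_low (anc_lam T) j (3 * i) (by simpa using hnj.le) Finset.univ D
    (conn_univ T) hD hm
  refine ⟨D'.toBT, toBT_isOptimal T w ⟨g, fun D'' h'' => c.trans (hD.2 D'' h'')⟩, ?_⟩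
  rw [toBT_height]
  have hlW : (i : ℝ) ≤ 2 * Real.logb 2 ((W : ℝ) + 2) := log_succ_le W _ (by
    have : (0 : ℝ) ≤ W := Nat.cast_nonneg W
    linarith) (by linarith)
  have hln : (j : ℝ) ≤ 2 * Real.logb 2 (T.n : ℝ) :=
    log_succ_le T.n _ (by exact_mod_cast hn) le_rfl
  have hΔ : (1 : ℝ) ≤ T.maxDegree := by exact_mod_cast maxDegree_pos T hn
  have hR : (D'.height : ℝ) ≤ 4 * (T.maxDegree + 1) * (3 * i) + (T.maxDegree + 1) * j := by
    exact_mod_cast h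
  have hi0 : (0 : ℝ) ≤ i := Nat.cast_nonneg i
  have hj0 : (0 : ℝ) ≤ j := Nat.cast_nonneg j
  calc (D'.height : ℝ) ≤ (T.maxDegree + 1) * (12 * i + j) := by linarith
    _ ≤ (2 * T.maxDegree) * (12 * (i + j)) := by gcongr <;> linarith
    _ ≤ (2 * T.maxDegree) * (12 * (2 * Real.logb 2 ((W : ℝ) + 2) + 2 * Real.logb 2 (T.n : ℝ))) := by
        gcongr
    _ = _ := by ring
end
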